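/- arXiv:2602.15390 — 2 statements merged into one kernel-verified Lean document; each statement's English description precedes it below -/
import Mathlib

section
/- Let Λ ⊂ ℝ^d be a full-rank lattice and let P = Λ ∩ [0,1)^d contain at least 2 points. Then the mesh ratio of P with respect to [0,1]^d satisfies ρ(P) ≤ 2√d · ρ(Λ) if h(Λ) ≥ 1/2, and ρ(P) ≤ (1+√d) · ρ(Λ) if h(Λ) < 1/2. -/
open scoped RealInnerProductSpace

noncomputable section

/-- `ℝ^d` with the Euclidean norm. -/
abbrev Euc (d : ℕ) := EuclideanSpace ℝ (Fin d)

/-- `Λ` is the full-rank lattice generated by the columns of the invertible matrix `T`. -/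
def IsLatticeOf {d : ℕ} (Λ : Set (Euc d)) (T : Matrix (Fin d) (Fin d) ℝ) : Prop :=
  IsUnit T.det ∧ Λ = { v : Euc d | ∃ k : Fin d → ℤ, ∀ i, v i = ∑ j, T i j * (k j : ℝ) }

/-- Covering radius of `Λ` with respect to all of `ℝ^d`:
`h(Λ) = sup_{x ∈ ℝ^d} inf_{y ∈ Λ} ‖x - y‖₂`. -/
def covRad {d : ℕ} (Λ : Set (Euc d)) : ℝ :=
  ⨆ x : Euc d, sInf (Set.image (dist x) Λ)

/-- Separation radius of a lattice: half the length of the shortest nonzero vector. -/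
def sepRad {d : ℕ} (Λ : Set (Euc d)) : ℝ :=
  (1 / 2) * sInf (Set.image norm (Λ \ {0}))

/-- Mesh ratio `ρ(Λ) = h(Λ)/q(Λ)` of a lattice. -/
def meshRatio {d : ℕ} (Λ : Set (Euc d)) : ℝ := covRad Λ / sepRad Λ

/-- The `j`-th successive minimum of `Λ` with respect to the Euclidean unit ball:
`λ_j(Λ) = inf { r > 0 : dim span(Λ ∩ rB_d) ≥ j }`. -/
def succMin {d : ℕ} (Λ : Set (Euc d)) (j : ℕ) : ℝ :=
  sInf { r : ℝ | 0 < r ∧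
    j ≤ Module.finrank ℝ (Submodule.span ℝ (Λ ∩ Metric.closedBall (0 : Euc d) r)) }

/-- The dual lattice `Λ⊥ = { y : x·y ∈ ℤ for all x ∈ Λ }`. -/
def dualLat {d : ℕ} (Λ : Set (Euc d)) : Set (Euc d) :=
  { y | ∀ x ∈ Λ, ∃ n : ℤ, ⟪x, y⟫ = (n : ℝ) }

/-- The closed unit cube `[0,1]^d`. -/
def unitCube (d : ℕ) : Set (Euc d) := { x | ∀ i, 0 ≤ x i ∧ x i ≤ 1 }

/-- The half-open unit cube `[0,1)^d`. -/
def halfOpenCube (d : ℕ) : Set (Euc d) := { x | ∀ i, 0 ≤ x i ∧ x i < 1 }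

/-- Covering radius of a point set `P` with respect to the unit cube `[0,1]^d`. -/
def covRadCube {d : ℕ} (P : Set (Euc d)) : ℝ :=
  ⨆ x : unitCube d, sInf (Set.image (dist (x : Euc d)) P)

/-- Separation radius of a point set:
`q(P) = (1/2) min_{x ≠ y ∈ P} ‖x - y‖₂`. -/
def sepRadSet {d : ℕ} (P : Set (Euc d)) : ℝ :=
  (1 / 2) * sInf { r : ℝ | ∃ x ∈ P, ∃ y ∈ P, x ≠ y ∧ r = dist x y }

/-- Mesh ratio `ρ(P) = h(P)/q(P)` of a point set with respect to `[0,1]^d`. -/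
def meshRatioSet {d : ℕ} (P : Set (Euc d)) : ℝ := covRadCube P / sepRadSet P

/-- The constant `C_d = 2^d Γ(1+d/2) / π^{d/2}`. -/
def Cd (d : ℕ) : ℝ := 2 ^ d * Real.Gamma (1 + (d : ℝ) / 2) / Real.pi ^ ((d : ℝ) / 2)

/-!
Passing from `Λ` to `P = Λ ∩ [0,1)^d` can only increase the separation radius, because differences
of points of `P` are lattice vectors. So it suffices to bound `h(P)` by a multiple of `h(Λ)`.
If `h(Λ) ≥ 1/2`, the diameter `√d ≤ 2√d h(Λ)` of the cube already does. If `h(Λ) < r < 1/2`, move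
`x ∈ [0,1]^d` by at most `r` in each coordinate to a point `z ∈ [r,1-r]^d`; some lattice point lies
within distance `r` of `z`, hence in `[0,1)^d`, and is at distance at most `(1 + √d) r` from `x`.
Then let `r → h(Λ)`.
-/

open Metric Set

theorem abs_sub_projIcc_le {a b ε x : ℝ} (hab : a ≤ b) (hε : 0 ≤ ε)
    (hx : x ∈ Icc (a - ε) (b + ε)) : |x - projIcc a b hab x| ≤ ε := by
  rw [coe_projIcc, abs_le]
  constructor <;> grind

theorem dist_le_sqrt_card_mul {ι : Type*} [Fintype ι] {x y : EuclideanSpace ℝ ι} {c : ℝ}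
    (hc : 0 ≤ c) (h : ∀ i, |x i - y i| ≤ c) : dist x y ≤ √(Fintype.card ι) * c := by
  calc dist x y = √(∑ i, dist (x i) (y i) ^ 2) := EuclideanSpace.dist_eq x y
    _ ≤ √(∑ _i : ι, c ^ 2) := by gcongr with i; exact h i
    _ = √(Fintype.card ι) * c := by simp [Real.sqrt_sq hc]

theorem sInf_image_dist_eq_infDist {α : Type*} [PseudoMetricSpace α] (x : α) (s : Set α) :
    sInf (dist x '' s) = infDist x s := by
  rw [infDist_eq_iInf, sInf_image']

theorem exists_basis_apply_eq_of_isUnit_det {𝕜 ι : Type*} [RCLike 𝕜] [Fintype ι] [DecidableEq ι]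
    {T : Matrix ι ι 𝕜} (hT : IsUnit T.det) :
    ∃ b : Module.Basis ι 𝕜 (EuclideanSpace 𝕜 ι), ∀ i j, b j i = T i j := by
  let e := (EuclideanSpace.basisFun ι 𝕜).toBasis
  refine ⟨e.map (Matrix.toLinearEquiv e T hT), fun i j => ?_⟩
  rw [Module.Basis.map_apply, Matrix.toLinearEquiv_apply, Matrix.toLin_self]
  simp [e, Pi.single_apply]

theorem bddAbove_range_infDist_span_int {ι E : Type*} [Finite ι] [NormedAddCommGroup E]
    [NormedSpace ℝ E] (b : Module.Basis ι ℝ E) :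
    BddAbove (range fun x : E => infDist x (Submodule.span ℤ (range b) : Set E)) := by
  cases nonempty_fintype ι
  refine ⟨∑ i, ‖b i‖, forall_mem_range.2 fun x => ?_⟩
  calc infDist x (Submodule.span ℤ (range b) : Set E)
      ≤ dist x (ZSpan.floor b x) := infDist_le_dist_of_mem (ZSpan.floor b x).2
    _ = ‖ZSpan.fract b x‖ := dist_eq_norm _ _
    _ ≤ ∑ i, ‖b i‖ := ZSpan.norm_fract_le b x

variable {d : ℕ}

theorem IsLatticeOf.exists_basis {Λ : Set (Euc d)} {T : Matrix (Fin d) (Fin d) ℝ}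
    (hT : IsLatticeOf Λ T) :
    ∃ b : Module.Basis (Fin d) ℝ (Euc d), Λ = Submodule.span ℤ (range b) := by
  obtain ⟨hdet, rfl⟩ := hT
  obtain ⟨b, hb⟩ := exists_basis_apply_eq_of_isUnit_det hdet
  refine ⟨b, ext fun v => ?_⟩
  simp [Submodule.mem_span_range_iff_exists_fun, PiLp.ext_iff, hb, mul_comm, eq_comm]

theorem covRad_eq_iSup_infDist (S : Set (Euc d)) : covRad S = ⨆ x : Euc d, infDist x S := by
  simp only [covRad, sInf_image_dist_eq_infDist]

theorem covRadCube_eq_iSup_infDist (P : Set (Euc d)) :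
    covRadCube P = ⨆ x : unitCube d, infDist (x : Euc d) P := by
  simp only [covRadCube, sInf_image_dist_eq_infDist]

theorem covRad_nonneg (S : Set (Euc d)) : 0 ≤ covRad S := by
  rw [covRad_eq_iSup_infDist]
  exact Real.iSup_nonneg fun _ => infDist_nonneg

theorem covRadCube_nonneg (P : Set (Euc d)) : 0 ≤ covRadCube P := by
  rw [covRadCube_eq_iSup_infDist]
  exact Real.iSup_nonneg fun _ => infDist_nonneg

theorem covRadCube_le {P : Set (Euc d)} {c : ℝ} (hc : 0 ≤ c)
    (h : ∀ x ∈ unitCube d, ∃ y ∈ P, dist x y ≤ c) : covRadCube P ≤ c := by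
  rw [covRadCube_eq_iSup_infDist]
  refine Real.iSup_le (fun x => ?_) hc
  obtain ⟨y, hy, hxy⟩ := h x x.2
  exact (infDist_le_dist_of_mem hy).trans hxy

theorem exists_dist_lt_of_covRad_lt {S : Set (Euc d)} (hS : S.Nonempty)
    (hbdd : BddAbove (range fun x : Euc d => infDist x S)) {r : ℝ} (hr : covRad S < r)
    (x : Euc d) : ∃ y ∈ S, dist x y < r := by
  rw [covRad_eq_iSup_infDist] at hr
  exact (infDist_lt_iff hS).1 ((le_ciSup hbdd x).trans_lt hr)

theorem halfOpenCube_subset_unitCube : halfOpenCube d ⊆ unitCube d :=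
  fun _ hx i => ⟨(hx i).1, (hx i).2.le⟩

theorem dist_le_sqrt_of_mem_unitCube {x y : Euc d} (hx : x ∈ unitCube d) (hy : y ∈ unitCube d) :
    dist x y ≤ √d := by
  have hcoord (i : Fin d) : |x i - y i| ≤ 1 := by
    simpa using abs_sub_le_of_le_of_le (hx i).1 (hx i).2 (hy i).1 (hy i).2
  simpa using dist_le_sqrt_card_mul zero_le_one hcoord

theorem covRadCube_le_sqrt {P : Set (Euc d)} (hP : (P ∩ unitCube d).Nonempty) :
    covRadCube P ≤ √d := by
  obtain ⟨p, hpP, hp⟩ := hP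
  exact covRadCube_le (Real.sqrt_nonneg _) fun x hx =>
    ⟨p, hpP, dist_le_sqrt_of_mem_unitCube hx hp⟩

theorem exists_mem_Icc_dist_le_of_mem_unitCube {x : Euc d} (hx : x ∈ unitCube d) {r : ℝ}
    (hr₀ : 0 ≤ r) (hr : r ≤ 1 / 2) :
    ∃ z : Euc d, (∀ i, z i ∈ Icc r (1 - r)) ∧ dist x z ≤ √d * r := by
  have hab : r ≤ 1 - r := by linarith
  let z : Euc d := WithLp.toLp 2 fun i => projIcc r (1 - r) hab (x i)
  have hcoord (i : Fin d) : |x i - z i| ≤ r :=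
    abs_sub_projIcc_le hab hr₀ (by simpa using hx i)
  exact ⟨z, fun i => Subtype.prop _, by simpa using dist_le_sqrt_card_mul hr₀ hcoord⟩

theorem mem_halfOpenCube_of_dist_lt {z y : Euc d} {r : ℝ} (hz : ∀ i, z i ∈ Icc r (1 - r))
    (hzy : dist z y < r) : y ∈ halfOpenCube d := by
  intro i
  have hcoord : |z i - y i| < r := (PiLp.dist_apply_le z y i).trans_lt hzy
  obtain ⟨hlower, hupper⟩ := abs_lt.1 hcoord
  obtain ⟨hrz, hzr⟩ := hz i
  constructor <;> linarith

theorem covRadCube_inter_halfOpenCube_le_of_covRad_lt {S : Set (Euc d)} (hS : S.Nonempty)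
    (hbdd : BddAbove (range fun x : Euc d => infDist x S)) {r : ℝ}
    (hr : covRad S < r) (hr' : r ≤ 1 / 2) : covRadCube (S ∩ halfOpenCube d) ≤ (1 + √d) * r := by
  have hr₀ : 0 ≤ r := (covRad_nonneg S).trans hr.le
  refine covRadCube_le (by positivity) fun x hx => ?_
  obtain ⟨z, hz, hxz⟩ := exists_mem_Icc_dist_le_of_mem_unitCube hx hr₀ hr'
  obtain ⟨y, hyS, hzy⟩ := exists_dist_lt_of_covRad_lt hS hbdd hr z
  refine ⟨y, ⟨hyS, mem_halfOpenCube_of_dist_lt hz hzy⟩, ?_⟩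
  calc dist x y ≤ dist x z + dist z y := dist_triangle x z y
    _ ≤ √d * r + r := by gcongr
    _ = (1 + √d) * r := by ring

theorem covRadCube_inter_halfOpenCube_le {S : Set (Euc d)} (hS : S.Nonempty)
    (hbdd : BddAbove (range fun x : Euc d => infDist x S)) (h : covRad S < 1 / 2) :
    covRadCube (S ∩ halfOpenCube d) ≤ (1 + √d) * covRad S := by
  have hlim : Filter.Tendsto (fun r => (1 + √d) * r) (nhdsWithin (covRad S) (Ioi (covRad S)))
      (nhds ((1 + √d) * covRad S)) :=
    (by fun_prop : Continuous fun r => (1 + √d) * r).continuousWithinAt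
  refine ge_of_tendsto hlim ?_
  filter_upwards [Ioo_mem_nhdsGT h] with r ⟨hr, hr'⟩
  exact covRadCube_inter_halfOpenCube_le_of_covRad_lt hS hbdd hr hr'.le

theorem sepRad_pos {L : Submodule ℤ (Euc d)} [DiscreteTopology L]
    (hL : (L : Set (Euc d)).Nontrivial) : 0 < sepRad (L : Set (Euc d)) := by
  obtain ⟨ε, hε, hball⟩ :=
    exists_ball_inter_eq_singleton_of_mem_discrete ⟨‹DiscreteTopology L›⟩ L.zero_mem
  have hε_le : ε ≤ sInf (norm '' ((L : Set (Euc d)) \ {0})) := by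
    refine le_csInf (Nonempty.image norm (hL.exists_ne 0)) ?_
    rintro _ ⟨x, ⟨hxL, hx₀⟩, rfl⟩
    by_contra! hlt
    exact hx₀ (hball.subset ⟨mem_ball_zero_iff.2 hlt, hxL⟩)
  exact mul_pos one_half_pos (hε.trans_le hε_le)

theorem sepRad_le_sepRadSet {L : Submodule ℤ (Euc d)} {P : Set (Euc d)} (hP : P.Nontrivial)
    (hPL : P ⊆ L) : sepRad (L : Set (Euc d)) ≤ sepRadSet P := by
  obtain ⟨p, hp, q, hq, hpq⟩ := hP
  refine mul_le_mul_of_nonneg_left (le_csInf ⟨_, p, hp, q, hq, hpq, rfl⟩ ?_) one_half_pos.le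
  rintro _ ⟨x, hx, y, hy, hxy, rfl⟩
  have hbdd : BddBelow (norm '' ((L : Set (Euc d)) \ {0})) :=
    ⟨0, forall_mem_image.2 fun _ _ => norm_nonneg _⟩
  exact csInf_le hbdd
    ⟨x - y, ⟨L.sub_mem (hPL hx) (hPL hy), sub_ne_zero.2 hxy⟩, (dist_eq_norm x y).symm⟩

theorem meshRatioSet_le_mul_meshRatio {S P : Set (Euc d)} {c : ℝ} (hS : 0 < sepRad S)
    (hsep : sepRad S ≤ sepRadSet P) (hcov : covRadCube P ≤ c * covRad S) :
    meshRatioSet P ≤ c * meshRatio S := by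
  rw [meshRatioSet, meshRatio, ← mul_div_assoc]
  exact div_le_div₀ ((covRadCube_nonneg P).trans hcov) hcov hS hsep

theorem stmt5 {d : ℕ} (Λ : Set (Euc d)) (T : Matrix (Fin d) (Fin d) ℝ)
    (hT : IsLatticeOf Λ T) (hP : (Λ ∩ halfOpenCube d).Nontrivial) :
    (1 / 2 ≤ covRad Λ →
      meshRatioSet (Λ ∩ halfOpenCube d) ≤ 2 * Real.sqrt d * meshRatio Λ) ∧
    (covRad Λ < 1 / 2 →
      meshRatioSet (Λ ∩ halfOpenCube d) ≤ (1 + Real.sqrt d) * meshRatio Λ) := by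
  obtain ⟨b, rfl⟩ := hT.exists_basis
  set L := Submodule.span ℤ (range b)
  have hpos : 0 < sepRad (L : Set (Euc d)) := sepRad_pos (hP.mono inter_subset_left)
  have hsep : sepRad (L : Set (Euc d)) ≤ sepRadSet (L ∩ halfOpenCube d) :=
    sepRad_le_sepRadSet hP inter_subset_left
  refine ⟨fun h => meshRatioSet_le_mul_meshRatio hpos hsep ?_,
    fun h => meshRatioSet_le_mul_meshRatio hpos hsep ?_⟩
  · have hmeet : ((L ∩ halfOpenCube d : Set (Euc d)) ∩ unitCube d).Nonempty :=
      hP.nonempty.mono fun _ hx => ⟨hx, halfOpenCube_subset_unitCube hx.2⟩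
    calc covRadCube (L ∩ halfOpenCube d) ≤ √d := covRadCube_le_sqrt hmeet
      _ = 2 * √d * (1 / 2) := by ring
      _ ≤ 2 * √d * covRad (L : Set (Euc d)) := by gcongr
  · exact covRadCube_inter_halfOpenCube_le ⟨0, L.zero_mem⟩ (bddAbove_range_infDist_span_int b) h

end
end

section
/- Let d ≥ 1, let N ≥ 1 be an integer, let c₁ > 0, and let Λ ⊂ ℝ^d be a full-rank lattice with a generating matrix T satisfying |det(T)| = 1/N. If the shortest nonzero vector of Λ satisfies λ₁(Λ) ≥ c₁ · N^{−1/d}, then the mesh ratio of Λ satisfies ρ(Λ) ≤ √d · C_d / c₁^d, where C_d = 2^d Γ(1+d/2)/π^{d/2}. In particular, this bound is independent of N. -/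
open scoped RealInnerProductSpace

noncomputable section

/-!
Everything goes through the first and last successive minima `λ₁` and `λ_d`: the mesh ratio is at
most `√d · λ_d / λ₁`, and `λ₁ ^ (d - 1) · λ_d` is at most `C_d` times the covolume.

For the first bound, write a point as a real combination of `d` lattice vectors of length at most
`r` and round the coefficients to integers one at a time. Rounding a coefficient up or down at
random, with the correct mean, adds at most `r ^ 2 / 4` to the expected squared error, so one of the
two choices does as well.

For the second bound, let `r < λ_d`, so that the lattice vectors of length at most `r` are all
orthogonal to some unit vector `u`, and stretch the ball of radius `λ₁` by `r / λ₁` in the direction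
of `u`. A nonzero lattice vector in the resulting ellipsoid would have length at most `r`, hence be
orthogonal to `u`; but there the ellipsoid agrees with the ball, which is too small. So Minkowski's
convex body theorem bounds the volume of the ellipsoid.
-/

open Filter MeasureTheory Metric Module Submodule
open scoped Topology

section Rounding

variable {E : Type*} [NormedAddCommGroup E] [InnerProductSpace ℝ E]

theorem convexCombination_norm_smul_add_sq (v e : E) (f : ℝ) :
    (1 - f) * ‖f • v + e‖ ^ 2 + f * ‖(f - 1) • v + e‖ ^ 2 = ‖e‖ ^ 2 + f * (1 - f) * ‖v‖ ^ 2 := by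
  simp only [norm_add_sq_real, real_inner_smul_left, norm_smul, mul_pow, Real.norm_eq_abs, sq_abs]
  ring

theorem exists_int_norm_sub_smul_add_sq_le (v e : E) (a : ℝ) :
    ∃ n : ℤ, ‖(a - n) • v + e‖ ^ 2 ≤ ‖e‖ ^ 2 + ‖v‖ ^ 2 / 4 := by
  by_contra! h
  have h_floor : ‖e‖ ^ 2 + ‖v‖ ^ 2 / 4 < ‖Int.fract a • v + e‖ ^ 2 := h ⌊a⌋
  have h_ceil : ‖e‖ ^ 2 + ‖v‖ ^ 2 / 4 < ‖(Int.fract a - 1) • v + e‖ ^ 2 := by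
    simpa only [Int.fract, Int.cast_add, Int.cast_one, sub_sub] using h (⌊a⌋ + 1)
  have h_variance : Int.fract a * (1 - Int.fract a) * ‖v‖ ^ 2 ≤ 1 / 4 * ‖v‖ ^ 2 := by
    gcongr
    linarith [sq_nonneg (Int.fract a - 1 / 2)]
  have h_mean := convexCombination_norm_smul_add_sq v e (Int.fract a)
  have := mul_lt_mul_of_pos_left h_floor (sub_pos.2 (Int.fract_lt_one a))
  have := mul_le_mul_of_nonneg_left h_ceil.le (Int.fract_nonneg a)
  linarith

theorem exists_int_norm_sum_sub_smul_sq_le {ι : Type*} (v : ι → E) (a : ι → ℝ) (s : Finset ι) :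
    ∃ k : ι → ℤ, ‖∑ i ∈ s, (a i - k i) • v i‖ ^ 2 ≤ (∑ i ∈ s, ‖v i‖ ^ 2) / 4 := by
  classical
  induction s using Finset.induction_on with
  | empty => exact ⟨0, by simp⟩
  | insert j s hj ih =>
    obtain ⟨k, hk⟩ := ih
    obtain ⟨n, hn⟩ :=
      exists_int_norm_sub_smul_add_sq_le (v j) (∑ i ∈ s, (a i - k i) • v i) (a j)
    refine ⟨Function.update k j n, ?_⟩
    have h_unchanged : ∑ i ∈ s, (a i - (Function.update k j n i : ℤ)) • v i =
        ∑ i ∈ s, (a i - k i) • v i :=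
      Finset.sum_congr rfl fun i hi => by
        rw [Function.update_of_ne (ne_of_mem_of_not_mem hi hj)]
    rw [Finset.sum_insert hj, Finset.sum_insert hj, h_unchanged, Function.update_self]
    linarith

theorem exists_mem_dist_le_of_mem_span_inter_closedBall [FiniteDimensional ℝ E]
    (L : Submodule ℤ E) {r : ℝ} (hr : 0 ≤ r) {x : E}
    (hx : x ∈ span ℝ (L ∩ closedBall (0 : E) r)) :
    ∃ y ∈ L, dist x y ≤ √(finrank ℝ (span ℝ (L ∩ closedBall (0 : E) r))) / 2 * r := by
  obtain ⟨v, hv, hv_span, -⟩ := exists_fun_fin_finrank_span_eq ℝ (L ∩ closedBall (0 : E) r)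
  obtain ⟨a, rfl⟩ := (mem_span_range_iff_exists_fun ℝ).1 (hv_span ▸ hx)
  obtain ⟨k, hk⟩ := exists_int_norm_sum_sub_smul_sq_le v a Finset.univ
  refine ⟨∑ i, k i • v i, sum_mem fun i _ => L.smul_mem _ (hv i).1, ?_⟩
  have h_error : ∑ i, a i • v i - ∑ i, k i • v i = ∑ i, (a i - k i) • v i := by
    simp only [sub_smul, Int.cast_smul_eq_zsmul, Finset.sum_sub_distrib]
  rw [dist_eq_norm, h_error]
  refine le_of_sq_le_sq (hk.trans ?_) (by positivity)
  calc (∑ i, ‖v i‖ ^ 2) / 4 ≤ (∑ _i, r ^ 2) / 4 := by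
        gcongr with i
        exact mem_closedBall_zero_iff.1 (hv i).2
    _ = (√(finrank ℝ (span ℝ (L ∩ closedBall (0 : E) r))) / 2 * r) ^ 2 := by
        rw [Finset.sum_const, Finset.card_fin, nsmul_eq_mul, mul_pow, div_pow,
          Real.sq_sqrt (Nat.cast_nonneg _)]
        ring

end Rounding

section Stretch

variable {E : Type*} [NormedAddCommGroup E] [InnerProductSpace ℝ E]

/-- The linear map scaling the direction of the unit vector `u` by `t` and fixing the orthogonal
complement of `u`. It maps balls to the ellipsoids to which Minkowski's theorem is applied. -/
def stretch (u : E) (t : ℝ) : E →ₗ[ℝ] E :=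
  LinearMap.transvection ((t - 1) • innerₛₗ ℝ u) u

variable {u : E}

theorem stretch_apply (t : ℝ) (y : E) : stretch u t y = y + ((t - 1) * ⟪u, y⟫) • u := by
  simp [stretch, LinearMap.transvection.apply]

theorem det_stretch [FiniteDimensional ℝ E] (hu : ‖u‖ = 1) (t : ℝ) :
    LinearMap.det (stretch u t) = t := by
  simp [stretch, LinearMap.transvection.det, hu]

theorem inner_stretch (hu : ‖u‖ = 1) (t : ℝ) (y : E) : ⟪u, stretch u t y⟫ = t * ⟪u, y⟫ := by
  rw [stretch_apply, inner_add_right, real_inner_smul_right, real_inner_self_eq_norm_sq, hu]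
  ring

theorem stretch_eq_self_of_inner_stretch_eq_zero (hu : ‖u‖ = 1) {t : ℝ} (ht : t ≠ 0) {y : E}
    (h : ⟪u, stretch u t y⟫ = 0) : stretch u t y = y := by
  rw [inner_stretch hu] at h
  simp [stretch_apply, (mul_eq_zero.1 h).resolve_left ht]

theorem norm_stretch_sq (hu : ‖u‖ = 1) (t : ℝ) (y : E) :
    ‖stretch u t y‖ ^ 2 = (‖y‖ ^ 2 - ⟪u, y⟫ ^ 2) + t ^ 2 * ⟪u, y⟫ ^ 2 := by
  rw [stretch_apply, norm_add_sq_real, norm_smul, real_inner_smul_right, mul_pow, hu,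
    Real.norm_eq_abs, sq_abs, real_inner_comm u y]
  ring

theorem norm_stretch_le (hu : ‖u‖ = 1) {t : ℝ} (ht : 0 ≤ t) (y : E) :
    ‖stretch u t y‖ ≤ max 1 t * ‖y‖ := by
  have h_cauchy : ⟪u, y⟫ ^ 2 ≤ ‖y‖ ^ 2 := by
    simpa [hu] using sq_le_sq' (neg_le_of_abs_le (abs_real_inner_le_norm u y))
      (real_inner_le_norm u y)
  refine le_of_sq_le_sq ?_ (by positivity)
  calc ‖stretch u t y‖ ^ 2 = 1 ^ 2 * (‖y‖ ^ 2 - ⟪u, y⟫ ^ 2) + t ^ 2 * ⟪u, y⟫ ^ 2 := by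
        rw [norm_stretch_sq hu, one_pow, one_mul]
    _ ≤ max 1 t ^ 2 * (‖y‖ ^ 2 - ⟪u, y⟫ ^ 2) + max 1 t ^ 2 * ⟪u, y⟫ ^ 2 := by
        have := sub_nonneg.2 h_cauchy
        gcongr
        exacts [le_max_left _ _, le_max_right _ _]
    _ = (max 1 t * ‖y‖) ^ 2 := by ring

end Stretch

section Minkowski

theorem exists_mem_ne_zero_of_two_pow_mul_covolume_lt {E : Type*} [NormedAddCommGroup E]
    [NormedSpace ℝ E] [FiniteDimensional ℝ E] [MeasurableSpace E] [BorelSpace E]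
    (μ : Measure E) [μ.IsAddHaarMeasure] (L : Submodule ℤ E) [DiscreteTopology L] [IsZLattice ℝ L]
    {s : Set E} (h_symm : ∀ x ∈ s, -x ∈ s) (h_conv : Convex ℝ s)
    (h : 2 ^ finrank ℝ E * ZLattice.covolume L μ < μ.real s) :
    ∃ x ∈ L, x ≠ 0 ∧ x ∈ s := by
  let b := Free.chooseBasis ℤ L
  have h_fund := ZLattice.isAddFundamentalDomain b μ
  rw [ZLattice.covolume_eq_measure_fundamentalDomain L μ h_fund] at h
  have h_meas : μ (ZSpan.fundamentalDomain (b.ofZLatticeBasis ℝ)) * 2 ^ finrank ℝ E < μ s := by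
    have h_finite :=
      (ZSpan.fundamentalDomain_isBounded (b.ofZLatticeBasis ℝ)).measure_lt_top (μ := μ)
    refine lt_of_not_ge fun h_le => h.not_ge ?_
    rw [mul_comm]
    simpa [measureReal_def] using ENNReal.toReal_mono (by finiteness) h_le
  have : Countable L.toAddSubgroup := inferInstanceAs (Countable L)
  obtain ⟨⟨x, hxL⟩, hx0, hxs⟩ := exists_ne_zero_mem_lattice_of_measure_mul_two_pow_lt_measure
    (L := L.toAddSubgroup) h_fund h_symm h_conv h_meas
  exact ⟨x, hxL, fun hx => hx0 (Subtype.ext hx), hxs⟩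

variable {E : Type*} [NormedAddCommGroup E] [InnerProductSpace ℝ E] [FiniteDimensional ℝ E]

theorem exists_norm_eq_one_forall_inner_eq_zero {s : Set E} (hs : span ℝ s ≠ ⊤) :
    ∃ u : E, ‖u‖ = 1 ∧ ∀ x ∈ s, ⟪u, x⟫ = 0 := by
  obtain ⟨w, hw, hw0⟩ := exists_mem_ne_zero_of_ne_bot (mt (orthogonal_eq_bot_iff).1 hs)
  refine ⟨(‖w‖⁻¹ : ℝ) • w, norm_smul_inv_norm hw0, fun x hx => ?_⟩
  rw [real_inner_smul_left, inner_left_of_mem_orthogonal (subset_span hx) hw, mul_zero]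

theorem div_mul_measure_ball_le_covolume [MeasurableSpace E] [BorelSpace E]
    (μ : Measure E) [μ.IsAddHaarMeasure] (L : Submodule ℤ E) [DiscreteTopology L] [IsZLattice ℝ L]
    {m r : ℝ} (hm : 0 < m) (hr : 0 < r) (h_min : ∀ x ∈ L, x ≠ 0 → m ≤ ‖x‖)
    (h_span : span ℝ (L ∩ closedBall (0 : E) r) ≠ ⊤) :
    r / m * μ.real (ball 0 m) ≤ 2 ^ finrank ℝ E * ZLattice.covolume L μ := by
  obtain ⟨u, hu, hu_orth⟩ := exists_norm_eq_one_forall_inner_eq_zero h_span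
  by_contra! h_vol
  have h_ellipsoid : μ.real (stretch u (r / m) '' ball 0 m) = r / m * μ.real (ball 0 m) := by
    rw [measureReal_def, Measure.addHaar_image_linearMap, det_stretch hu, ENNReal.toReal_mul,
      ENNReal.toReal_ofReal (abs_nonneg _), abs_of_pos (div_pos hr hm), measureReal_def]
  obtain ⟨_, hxL, hx0, y, hy, rfl⟩ := exists_mem_ne_zero_of_two_pow_mul_covolume_lt μ L
    (by rintro _ ⟨y, hy, rfl⟩; exact ⟨-y, by simpa using hy, map_neg _ _⟩)
    ((convex_ball 0 m).linear_image (stretch u (r / m))) (h_ellipsoid ▸ h_vol)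
  set x := stretch u (r / m) y
  have hy_lt : ‖y‖ < m := mem_ball_zero_iff.1 hy
  have hmx : m ≤ ‖x‖ := h_min x hxL hx0
  have hx_lt : ‖x‖ < max m r := by
    calc ‖x‖ ≤ max 1 (r / m) * ‖y‖ := norm_stretch_le hu (by positivity) y
      _ < max 1 (r / m) * m := by gcongr
      _ = max m r := by rw [max_mul_of_nonneg _ _ hm.le, one_mul, div_mul_cancel₀ _ hm.ne']
  have hxr : ‖x‖ ≤ r := ((lt_max_iff.1 hx_lt).resolve_left hmx.not_gt).le
  have hxy : x = y := stretch_eq_self_of_inner_stretch_eq_zero hu (by positivity)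
    (hu_orth x ⟨hxL, mem_closedBall_zero_iff.2 hxr⟩)
  exact hy_lt.not_ge (hxy ▸ hmx)

end Minkowski

section SuccessiveMinima

theorem sInf_upperClosure {α : Type*} [ConditionallyCompleteLinearOrder α] (s : Set α) :
    sInf (upperClosure s : Set α) = sInf s := by
  by_cases h_bdd : BddBelow s
  · rcases s.eq_empty_or_nonempty with rfl | hs
    · simp
    · refine IsGLB.csInf_eq ?_ (hs.mono subset_upperClosure)
      rw [IsGLB, lowerBounds_upperClosure]
      exact isGLB_csInf hs h_bdd
  · rw [csInf_of_not_bddBelow h_bdd, csInf_of_not_bddBelow (by rwa [bddBelow_upperClosure])]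

variable {d : ℕ} {Λ : Set (Euc d)} {r : ℝ}

theorem one_le_finrank_span_inter_closedBall_iff :
    1 ≤ finrank ℝ (span ℝ (Λ ∩ closedBall (0 : Euc d) r)) ↔ ∃ x ∈ Λ \ {0}, ‖x‖ ≤ r := by
  rw [one_le_finrank_iff, Ne, span_eq_bot]
  simp only [Set.mem_inter_iff, mem_closedBall_zero_iff, Set.mem_sdiff, Set.mem_singleton_iff]
  grind

theorem succMin_one_eq_sInf_norm (Λ : Set (Euc d)) :
    succMin Λ 1 = sInf (norm '' (Λ \ {0})) := by
  have h_closure : {r : ℝ | 0 < r ∧ 1 ≤ finrank ℝ (span ℝ (Λ ∩ closedBall (0 : Euc d) r))} =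
      upperClosure (norm '' (Λ \ {0})) := by
    ext r
    simp only [one_le_finrank_span_inter_closedBall_iff, SetLike.mem_coe, mem_upperClosure,
      Set.exists_mem_image, Set.mem_ofPred_eq, and_iff_right_iff_imp, forall_exists_index, and_imp]
    exact fun x hx hxr => (norm_pos_iff.2 hx.2).trans_le hxr
  rw [succMin, h_closure, sInf_upperClosure]

theorem sepRad_eq_succMin_one_div_two (Λ : Set (Euc d)) : sepRad Λ = succMin Λ 1 / 2 := by
  rw [sepRad, succMin_one_eq_sInf_norm, one_div_mul_eq_div]

theorem succMin_one_le_norm {x : Euc d} (hx : x ∈ Λ) (hx0 : x ≠ 0) : succMin Λ 1 ≤ ‖x‖ := by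
  rw [succMin_one_eq_sInf_norm]
  exact csInf_le ⟨0, by rintro _ ⟨y, -, rfl⟩; exact norm_nonneg y⟩ ⟨x, ⟨hx, hx0⟩, rfl⟩

theorem span_inter_closedBall_ne_top_of_lt_succMin (hr : 0 < r) (h : r < succMin Λ d) :
    span ℝ (Λ ∩ closedBall (0 : Euc d) r) ≠ ⊤ := by
  intro h_top
  refine h.not_ge (csInf_le ⟨0, fun s hs => hs.1.le⟩ ⟨hr, ?_⟩)
  rw [h_top, finrank_top, finrank_euclideanSpace_fin]

theorem exists_pos_span_inter_closedBall_eq_top (h_span : span ℝ Λ = ⊤) :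
    ∃ R > 0, span ℝ (Λ ∩ closedBall (0 : Euc d) R) = ⊤ := by
  obtain ⟨v, hv, hv_span, -⟩ := exists_fun_fin_finrank_span_eq ℝ Λ
  obtain ⟨R, hR, hvR⟩ := (Set.finite_range v).isBounded.subset_closedBall_lt 0 0
  refine ⟨R, hR, top_le_iff.1 ?_⟩
  rw [← h_span, ← hv_span]
  exact span_mono (Set.subset_inter (Set.range_subset_iff.2 hv) hvR)

theorem span_inter_closedBall_eq_top_of_succMin_lt (h_span : span ℝ Λ = ⊤) (h : succMin Λ d < r) :
    span ℝ (Λ ∩ closedBall (0 : Euc d) r) = ⊤ := by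
  obtain ⟨R, hR, hR_top⟩ := exists_pos_span_inter_closedBall_eq_top h_span
  have h_nonempty : {s : ℝ | 0 < s ∧
      d ≤ finrank ℝ (span ℝ (Λ ∩ closedBall (0 : Euc d) s))}.Nonempty :=
    ⟨R, hR, by rw [hR_top, finrank_top, finrank_euclideanSpace_fin]⟩
  obtain ⟨s, ⟨-, hs⟩, hsr⟩ := exists_lt_of_csInf_lt h_nonempty h
  have hs_top : span ℝ (Λ ∩ closedBall (0 : Euc d) s) = ⊤ :=
    eq_top_of_finrank_eq ((finrank_le _).antisymm (by rwa [finrank_euclideanSpace_fin]))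
  rw [← top_le_iff, ← hs_top]
  gcongr

theorem succMin_nonneg (Λ : Set (Euc d)) (j : ℕ) : 0 ≤ succMin Λ j :=
  Real.sInf_nonneg fun _ hr => hr.1.le

end SuccessiveMinima

section MeshRatio

variable {d : ℕ}

theorem covRad_le_of_forall_exists_dist_le {Λ : Set (Euc d)} {R : ℝ}
    (h : ∀ x, ∃ y ∈ Λ, dist x y ≤ R) : covRad Λ ≤ R := by
  refine ciSup_le fun x => ?_
  obtain ⟨y, hy, hxy⟩ := h x
  have h_bdd : BddBelow (dist x '' Λ) := ⟨0, by rintro _ ⟨z, -, rfl⟩; exact dist_nonneg⟩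
  exact (csInf_le h_bdd ⟨y, hy, rfl⟩).trans hxy

theorem covRad_le_sqrt_div_two_mul_succMin (L : Submodule ℤ (Euc d))
    (h_span : span ℝ (L : Set (Euc d)) = ⊤) :
    covRad (L : Set (Euc d)) ≤ √d / 2 * succMin (L : Set (Euc d)) d := by
  have h_gt : ∀ r > succMin (L : Set (Euc d)) d, covRad (L : Set (Euc d)) ≤ √d / 2 * r := by
    intro r hr
    have h_top := span_inter_closedBall_eq_top_of_succMin_lt h_span hr
    refine covRad_le_of_forall_exists_dist_le fun x => ?_
    obtain ⟨y, hyL, hxy⟩ := exists_mem_dist_le_of_mem_span_inter_closedBall L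
      ((succMin_nonneg _ _).trans hr.le) (h_top ▸ mem_top : x ∈ _)
    rw [h_top, finrank_top, finrank_euclideanSpace_fin] at hxy
    exact ⟨y, hyL, hxy⟩
  have h_tendsto : Tendsto (√d / 2 * ·) (𝓝[>] succMin (L : Set (Euc d)) d)
      (𝓝 (√d / 2 * succMin (L : Set (Euc d)) d)) :=
    ((continuous_const_mul (√d / 2)).tendsto _).mono_left nhdsWithin_le_nhds
  exact ge_of_tendsto h_tendsto (eventually_mem_nhdsWithin.mono h_gt)

theorem meshRatio_le_sqrt_mul_succMin_div_succMin_one (L : Submodule ℤ (Euc d))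
    (h_span : span ℝ (L : Set (Euc d)) = ⊤) :
    meshRatio (L : Set (Euc d)) ≤
      √d * (succMin (L : Set (Euc d)) d / succMin (L : Set (Euc d)) 1) := by
  have h_nonneg := succMin_nonneg (L : Set (Euc d)) 1
  calc meshRatio (L : Set (Euc d))
      = covRad (L : Set (Euc d)) / (succMin (L : Set (Euc d)) 1 / 2) := by
        rw [meshRatio, sepRad_eq_succMin_one_div_two]
    _ ≤ √d / 2 * succMin (L : Set (Euc d)) d / (succMin (L : Set (Euc d)) 1 / 2) := by
        gcongr
        exact covRad_le_sqrt_div_two_mul_succMin L h_span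
    _ = √d * (succMin (L : Set (Euc d)) d / succMin (L : Set (Euc d)) 1) := by ring

variable (L : Submodule ℤ (Euc d)) [DiscreteTopology L] [IsZLattice ℝ L]

theorem succMin_div_succMin_one_mul_volume_ball_le (h_pos : 0 < succMin (L : Set (Euc d)) 1) :
    succMin (L : Set (Euc d)) d / succMin (L : Set (Euc d)) 1 *
      volume.real (ball (0 : Euc d) (succMin (L : Set (Euc d)) 1)) ≤
      2 ^ d * ZLattice.covolume L := by
  set m := succMin (L : Set (Euc d)) 1
  have h_ball : 0 < volume.real (ball (0 : Euc d) m) :=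
    ENNReal.toReal_pos (measure_ball_pos _ _ h_pos).ne' measure_ball_lt_top.ne
  have h_covol := ZLattice.covolume_pos L
  rw [← le_div_iff₀ h_ball, div_le_iff₀ h_pos]
  refine le_of_forall_lt_imp_le_of_dense fun r hr => ?_
  rcases le_or_gt r 0 with hr0 | hr0
  · exact hr0.trans (by positivity)
  · rw [← div_le_iff₀ h_pos, le_div_iff₀ h_ball]
    simpa only [finrank_euclideanSpace_fin] using div_mul_measure_ball_le_covolume volume L h_pos
      hr0 (fun x => succMin_one_le_norm) (span_inter_closedBall_ne_top_of_lt_succMin hr0 hr)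

theorem Cd_pos (d : ℕ) : 0 < Cd d := by
  unfold Cd
  positivity

theorem volume_real_ball_eq_pow_mul_div_Cd (hd : 1 ≤ d) {r : ℝ} (hr : 0 ≤ r) :
    volume.real (ball (0 : Euc d) r) = r ^ d * (2 ^ d / Cd d) := by
  have : NeZero d := ⟨by lia⟩
  have h_pi : √Real.pi ^ d = Real.pi ^ ((d : ℝ) / 2) := by
    rw [Real.sqrt_eq_rpow, ← Real.rpow_mul_natCast Real.pi_pos.le, one_div_mul_eq_div]
  rw [measureReal_def, EuclideanSpace.volume_ball, Fintype.card_fin, h_pi, Cd, add_comm (_ / _),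
    ENNReal.toReal_mul, ENNReal.toReal_pow, ENNReal.toReal_ofReal hr,
    ENNReal.toReal_ofReal (by positivity)]
  field_simp

theorem succMin_div_succMin_one_le_covolume_div (hd : 1 ≤ d)
    (h_pos : 0 < succMin (L : Set (Euc d)) 1) :
    succMin (L : Set (Euc d)) d / succMin (L : Set (Euc d)) 1 ≤
      Cd d * ZLattice.covolume L / succMin (L : Set (Euc d)) 1 ^ d := by
  have h_minkowski := succMin_div_succMin_one_mul_volume_ball_le L h_pos
  have hC := Cd_pos d
  rw [volume_real_ball_eq_pow_mul_div_Cd hd h_pos.le, ← le_div_iff₀ (by positivity)] at h_minkowski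
  refine h_minkowski.trans_eq ?_
  field_simp

theorem meshRatio_le_covolume_div_succMin_one_pow (hd : 1 ≤ d)
    (h_pos : 0 < succMin (L : Set (Euc d)) 1) :
    meshRatio (L : Set (Euc d)) ≤
      √d * (Cd d * ZLattice.covolume L / succMin (L : Set (Euc d)) 1 ^ d) :=
  (meshRatio_le_sqrt_mul_succMin_div_succMin_one L IsZLattice.span_top).trans <|
    mul_le_mul_of_nonneg_left (succMin_div_succMin_one_le_covolume_div L hd h_pos)
      (Real.sqrt_nonneg _)

end MeshRatio

section GeneratingMatrix

variable {d : ℕ} {T : Matrix (Fin d) (Fin d) ℝ}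

/-- The basis of `ℝ^d` formed by the columns of an invertible matrix. -/
def columnBasis (T : Matrix (Fin d) (Fin d) ℝ) (hT : IsUnit T.det) : Basis (Fin d) ℝ (Euc d) :=
  (EuclideanSpace.basisFun (Fin d) ℝ).toBasis.map
    (T.toLinearEquiv (EuclideanSpace.basisFun (Fin d) ℝ).toBasis hT)

theorem columnBasis_apply (hT : IsUnit T.det) (i j : Fin d) : columnBasis T hT j i = T i j := by
  change Matrix.toLin (EuclideanSpace.basisFun (Fin d) ℝ).toBasis
    (EuclideanSpace.basisFun (Fin d) ℝ).toBasis T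
    ((EuclideanSpace.basisFun (Fin d) ℝ).toBasis j) i = T i j
  rw [Matrix.toLin_self]
  simp [Pi.single_apply]

theorem IsLatticeOf.eq_span_columnBasis {Λ : Set (Euc d)} (hT : IsLatticeOf Λ T) :
    Λ = span ℤ (Set.range (columnBasis T hT.1)) := by
  ext x
  nth_rw 1 [hT.2]
  simp only [Set.mem_ofPred_eq, SetLike.mem_coe, mem_span_range_iff_exists_fun]
  refine exists_congr fun k => ?_
  simp [PiLp.ext_iff, columnBasis_apply, mul_comm, eq_comm]

theorem covolume_span_columnBasis (hT : IsUnit T.det) :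
    ZLattice.covolume (span ℤ (Set.range (columnBasis T hT))) = |T.det| := by
  let e := EuclideanSpace.basisFun (Fin d) ℝ
  have h_det : e.toBasis.det (columnBasis T hT) = T.det := by
    rw [Basis.det_apply]
    congr 1
    ext i j
    simp [e, Basis.toMatrix_apply, columnBasis_apply]
  have h_cube : volume.real (ZSpan.fundamentalDomain e.toBasis) = 1 := by
    rw [measureReal_congr (ZSpan.fundamentalDomain_ae_parallelepiped _ _), measureReal_def,
      e.coe_toBasis, e.volume_parallelepiped, ENNReal.toReal_one]
  rw [ZLattice.covolume_eq_measure_fundamentalDomain _ _ (ZSpan.isAddFundamentalDomain _ _),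
    ZSpan.measureReal_fundamentalDomain _ _ e.toBasis, h_det, h_cube, mul_one]

end GeneratingMatrix

theorem stmt8_general {d : ℕ} (hd : 1 ≤ d) {c₁ : ℝ} (hc : 0 < c₁) {Λ : Set (Euc d)}
    {T : Matrix (Fin d) (Fin d) ℝ} (hT : IsLatticeOf Λ T)
    (hlam : c₁ * |T.det| ^ ((1 : ℝ) / d) ≤ succMin Λ 1) :
    meshRatio Λ ≤ √d * Cd d / c₁ ^ d := by
  have h_det : 0 < |T.det| := abs_pos.2 hT.1.ne_zero
  have hC := Cd_pos d
  have h_pow : (c₁ * |T.det| ^ ((1 : ℝ) / d)) ^ d = c₁ ^ d * |T.det| := by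
    rw [mul_pow, one_div, Real.rpow_inv_natCast_pow h_det.le (by lia)]
  have h_pos : 0 < succMin Λ 1 := lt_of_lt_of_le (by positivity) hlam
  have h_mesh : meshRatio Λ ≤ √d * (Cd d * |T.det| / succMin Λ 1 ^ d) := by
    have hu : IsUnit T.det := hT.1
    have hΛ : Λ = span ℤ (Set.range (columnBasis T hu)) := hT.eq_span_columnBasis
    subst hΛ
    rw [← covolume_span_columnBasis hu]
    exact meshRatio_le_covolume_div_succMin_one_pow _ hd h_pos
  calc meshRatio Λ ≤ √d * (Cd d * |T.det| / succMin Λ 1 ^ d) := h_mesh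
    _ ≤ √d * (Cd d * |T.det| / (c₁ * |T.det| ^ ((1 : ℝ) / d)) ^ d) := by gcongr
    _ = √d * Cd d / c₁ ^ d := by
      rw [h_pow]
      field_simp

theorem stmt8 {d : ℕ} (hd : 1 ≤ d) (N : ℕ) (hN : 1 ≤ N) (c₁ : ℝ) (hc : 0 < c₁)
    (Λ : Set (Euc d)) (T : Matrix (Fin d) (Fin d) ℝ) (hT : IsLatticeOf Λ T)
    (hdet : |T.det| = 1 / N)
    (hlam : succMin Λ 1 ≥ c₁ * (N : ℝ) ^ (-(1 : ℝ) / d)) :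
    meshRatio Λ ≤ Real.sqrt d * Cd d / c₁ ^ d := by
  refine stmt8_general hd hc hT ?_
  rwa [hdet, one_div (N : ℝ), ← Real.rpow_neg_eq_inv_rpow, ← neg_div]

end
end
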